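/- For the random field Ising model on V_n with i.i.d. standard Gaussian disorder, let F_n = F_n(β,h) = log Z_n(β,h). Then Σ_{x,y ∈ V_n} (E(∂⁴F_n / ∂g_x² ∂g_y²))² ≤ 24 h² |V_n|, where for x ≠ y the mixed fourth derivative is ∂⁴F_n/∂g_x²∂g_y² and for x = y it is ∂⁴F_n/∂g_x⁴, and E denotes expectation over the disorder. -/

import Mathlib

open Finset MeasureTheory ProbabilityTheory Real Filter

noncomputable section

/-- The box `V_n = ℤ^d ∩ [1,n]^d`. -/
def box (d n : ℕ) : Finset (Fin d → ℤ) := Fintype.piFinset fun _ => Finset.Icc 1 (n : ℤ)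

/-- Spin configurations on `V_n`, a spin is encoded by a `Bool`. -/
abbrev Config (d n : ℕ) := {x // x ∈ box d n} → Bool

/-- The spin value `±1` of a `Bool`. -/
def spin (b : Bool) : ℝ := if b then 1 else -1

/-- The (negative) Hamiltonian `β ∑_{⟨xy⟩} σ_x σ_y + h ∑_x g_x σ_x`, where
`⟨xy⟩` ranges over nearest-neighbor pairs in the box (each ordered pair counted
with weight 1/2, i.e. each unordered pair once). -/
def energy (d n : ℕ) (β h : ℝ) (g : {x // x ∈ box d n} → ℝ) (σ : Config d n) : ℝ :=
  β * ((1 : ℝ) / 2 * ∑ x : {x // x ∈ box d n}, ∑ y : {x // x ∈ box d n},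
      if (∑ i, |x.1 i - y.1 i|) = 1 then spin (σ x) * spin (σ y) else 0)
  + h * ∑ x, g x * spin (σ x)

/-- The partition function `Z_n(β,h)`. -/
def Z (d n : ℕ) (β h : ℝ) (g : {x // x ∈ box d n} → ℝ) : ℝ :=
  ∑ σ : Config d n, Real.exp (energy d n β h g σ)

/-- Gibbs expectation `⟨f⟩`. -/
def gibbs (d n : ℕ) (β h : ℝ) (g : {x // x ∈ box d n} → ℝ) (f : Config d n → ℝ) : ℝ :=
  (∑ σ : Config d n, f σ * Real.exp (energy d n β h g σ)) / Z d n β h g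

/-- Two-replica Gibbs expectation. -/
def gibbs2 (d n : ℕ) (β h : ℝ) (g : {x // x ∈ box d n} → ℝ)
    (f : Config d n → Config d n → ℝ) : ℝ :=
  (∑ σ1 : Config d n, ∑ σ2 : Config d n,
    f σ1 σ2 * (Real.exp (energy d n β h g σ1) * Real.exp (energy d n β h g σ2)))
    / (Z d n β h g) ^ 2

/-- The overlap `R_{1,2}` of two configurations. -/
def overlap (d n : ℕ) (σ1 σ2 : Config d n) : ℝ :=
  ((box d n).card : ℝ)⁻¹ * ∑ x, spin (σ1 x) * spin (σ2 x)

/-- The disorder: i.i.d. standard Gaussians indexed by the box. -/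
def μdis (d n : ℕ) : Measure ({x // x ∈ box d n} → ℝ) :=
  Measure.pi fun _ => gaussianReal 0 1

/-- Partial derivative in the coordinate `x`. -/
def pd {ι : Type*} [DecidableEq ι] (x : ι) (F : (ι → ℝ) → ℝ) : (ι → ℝ) → ℝ :=
  fun g => deriv (fun t => F (Function.update g x t)) (g x)

end

/-!
Fix `y` and put `f = ∂F/∂g_y`, `c_x = E ∂²(∂f/∂g_y)/∂g_x²` and `U = ∑ c_x (g_x² - 1)`. Gaussian
integration by parts gives `∑ c_x² = E[U ∂f/∂g_y] = E[(a_y U) f]`, where `a_y U = g_y U - ∂U/∂g_y`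
is the adjoint of `∂/∂g_y`. The commutation relation `[∂/∂g_y, a_y] = 1` yields
`E (a_y U)² = E U² + E (∂U/∂g_y)² ≤ 6 ∑ c_x²`, so `∑ c_x² ≤ 6 E f²`, a Bessel inequality for the
third Hermite functions `a_y H₂(g_x)`. For `F = log Z` the derivative `f` is `h` times a Gibbs
average of a spin, hence `|f| ≤ |h|`, and summing over `y` gives the bound, with constant `6`.

All these integrals converge because the Gibbs weights `w` are bounded and satisfy an autonomous
equation `Dw = Φ(w)` with `Φ` polynomial, which makes all their derivatives bounded.
-/

section TemperateGrowth

open scoped ContDiff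

variable {E F W : Type*} [NormedAddCommGroup E] [NormedSpace ℝ E] [NormedAddCommGroup F]
  [NormedSpace ℝ F] [NormedAddCommGroup W] [NormedSpace ℝ W]

theorem differentiable_of_hasTemperateGrowth {f : E → F} (hf : f.HasTemperateGrowth) :
    Differentiable ℝ f :=
  hf.1.differentiable (by simp)

theorem hasTemperateGrowth_fderiv {f : E → F} (hf : f.HasTemperateGrowth) :
    (fderiv ℝ f).HasTemperateGrowth := by
  refine ⟨hf.1.fderiv_right (by simp), fun n => ?_⟩
  simpa only [norm_iteratedFDeriv_fderiv] using hf.2 (n + 1)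

theorem contDiff_of_hasFDerivAt_comp {u : E → W} {Φ : W → E →L[ℝ] W} (hΦ : ContDiff ℝ ∞ Φ)
    (hu : ∀ x, HasFDerivAt u (Φ (u x)) x) : ContDiff ℝ ∞ u := by
  have hdiff : Differentiable ℝ u := fun x => (hu x).differentiableAt
  have hfderiv : fderiv ℝ u = Φ ∘ u := funext fun x => (hu x).fderiv
  refine contDiff_infty.2 fun n => ?_
  induction n with
  | zero => exact contDiff_zero.2 hdiff.continuous
  | succ n ih =>
    rw [Nat.cast_succ, contDiff_succ_iff_fderiv, hfderiv]
    refine ⟨hdiff, fun h => absurd h (by simp), ?_⟩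
    exact (hΦ.of_le (mod_cast le_top)).comp ih

/- Differentiating `Du = Φ ∘ u` bounds the derivatives of `u` of order `n + 1` by those of order
at most `n`. -/
theorem hasTemperateGrowth_of_hasFDerivAt_comp {u : E → W} {Φ : W → E →L[ℝ] W}
    (hΦ : Φ.HasTemperateGrowth) {B : ℝ} (hB : ∀ x, ‖u x‖ ≤ B)
    (hu : ∀ x, HasFDerivAt u (Φ (u x)) x) : u.HasTemperateGrowth := by
  have hsmooth := contDiff_of_hasFDerivAt_comp hΦ.1 hu
  have hfderiv : fderiv ℝ u = Φ ∘ u := funext fun x => (hu x).fderiv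
  have bounded : ∀ n, ∃ C, ∀ i ≤ n, ∀ x, ‖iteratedFDeriv ℝ i u x‖ ≤ C := by
    intro n
    induction n with
    | zero =>
      refine ⟨B, fun i hi x => ?_⟩
      obtain rfl := Nat.le_zero.1 hi
      simpa using hB x
    | succ n ih =>
      obtain ⟨C, hC⟩ := ih
      obtain ⟨k, A, hA, hΦn⟩ := hΦ.norm_iteratedFDeriv_le_uniform n
      have hC' : ∀ i, 1 ≤ i → i ≤ n → ∀ x, ‖iteratedFDeriv ℝ i u x‖ ≤ (max 1 C) ^ i :=
        fun i hi hin x => ((hC i hin x).trans (le_max_right _ _)).trans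
          (le_self_pow₀ (le_max_left _ _) (by lia))
      have hΦu : ∀ x, ∀ i ≤ n, ‖iteratedFDeriv ℝ i Φ (u x)‖ ≤ A * (1 + B) ^ k := fun x i hi =>
        (hΦn i hi (u x)).trans (by gcongr; exact hB x)
      refine ⟨max C (n.factorial * (A * (1 + B) ^ k) * (max 1 C) ^ n), fun i hi x => ?_⟩
      rcases Nat.le_succ_iff.1 hi with hi | rfl
      · exact (hC i hi x).trans (le_max_left _ _)
      · rw [← norm_iteratedFDeriv_fderiv, hfderiv]
        exact (norm_iteratedFDeriv_comp_le hΦ.1 hsmooth (mod_cast le_top) x (hΦu x)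
          fun j hj hjn => hC' j hj hjn x).trans (le_max_right _ _)
  refine ⟨hsmooth, fun n => ?_⟩
  obtain ⟨C, hC⟩ := bounded n
  exact ⟨0, C, fun x => by simpa using hC n le_rfl x⟩

end TemperateGrowth

section Gaussian

theorem integrable_of_hasTemperateGrowth {E F : Type*} [NormedAddCommGroup E] [NormedSpace ℝ E]
    [CompleteSpace E] [SecondCountableTopology E] [MeasurableSpace E] [BorelSpace E]
    [NormedAddCommGroup F] [NormedSpace ℝ F] {μ : Measure E} [IsGaussian μ] {f : E → F}
    (hf : f.HasTemperateGrowth) : Integrable f μ := by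
  obtain ⟨k, C, hC⟩ := hf.2 0
  have hpow : Integrable (fun x : E => (1 + ‖x‖) ^ k) μ := by
    have hnorm : MemLp (fun x : E => ‖x‖) k μ := (IsGaussian.memLp_id μ k (by simp)).norm
    refine ((memLp_const (1 : ℝ)).add hnorm).integrable_norm_pow'.congr (ae_of_all _ fun x => ?_)
    simp [abs_of_nonneg (by positivity : 0 ≤ 1 + ‖x‖)]
  exact (hpow.const_mul C).mono' hf.1.continuous.aestronglyMeasurable
    (ae_of_all _ fun x => by simpa using hC x)

instance isGaussian_pi {ι : Type*} [Fintype ι] {E : ι → Type*}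
    [∀ i, NormedAddCommGroup (E i)] [∀ i, NormedSpace ℝ (E i)] [∀ i, CompleteSpace (E i)]
    [∀ i, SecondCountableTopology (E i)] [∀ i, MeasurableSpace (E i)] [∀ i, BorelSpace (E i)]
    {μ : ∀ i, Measure (E i)} [∀ i, IsGaussian (μ i)] : IsGaussian (Measure.pi μ) := by
  have heval : ∀ i, HasGaussianLaw (Function.eval i) (Measure.pi μ) := fun i =>
    ⟨by rw [(measurePreserving_eval μ i).map_eq]; infer_instance⟩
  simpa using! (iIndepFun.hasGaussianLaw heval
    (iIndepFun_pi (X := fun i => id) fun i => aemeasurable_id)).isGaussian_map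

theorem measurePreserving_update {ι : Type*} [Fintype ι] [DecidableEq ι] {X : ι → Type*}
    [∀ i, MeasurableSpace (X i)] (μ : ∀ i, Measure (X i)) [∀ i, IsProbabilityMeasure (μ i)]
    (i : ι) :
    MeasurePreserving (fun p : (∀ j, X j) × X i => Function.update p.1 i p.2)
      ((Measure.pi μ).prod (μ i)) (Measure.pi μ) := by
  have hmeas : Measurable fun p : (∀ j, X j) × X i => Function.update p.1 i p.2 := by
    fun_prop
  refine ⟨hmeas, (Measure.pi_eq fun s hs => ?_).symm⟩
  have hpre : (fun p : (∀ j, X j) × X i => Function.update p.1 i p.2) ⁻¹' Set.univ.pi s =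
      Set.univ.pi (Function.update s i Set.univ) ×ˢ s i := by
    ext p
    simp only [Set.mem_preimage, Set.mem_univ_pi, Set.mem_prod]
    grind [Function.update_apply]
  rw [Measure.map_apply hmeas (.univ_pi hs), hpre, Measure.prod_prod, Measure.pi_pi,
    ← Finset.prod_erase_mul _ _ (mem_univ i), ← Finset.prod_erase_mul _ _ (mem_univ i)]
  simp only [Function.update_self, measure_univ, mul_one]
  congr 1
  exact prod_congr rfl fun j hj => by rw [Function.update_of_ne (ne_of_mem_erase hj)]

theorem integral_pi_eq_integral_integral_update {ι : Type*} [Fintype ι] [DecidableEq ι]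
    {X : ι → Type*} [∀ i, MeasurableSpace (X i)] {μ : ∀ i, Measure (X i)}
    [∀ i, IsProbabilityMeasure (μ i)] {V : Type*} [NormedAddCommGroup V] [NormedSpace ℝ V]
    {F : (∀ i, X i) → V} (hF : Integrable F (Measure.pi μ)) (x : ι) :
    ∫ g, F g ∂Measure.pi μ = ∫ g, ∫ t, F (Function.update g x t) ∂μ x ∂Measure.pi μ := by
  have hupdate := measurePreserving_update μ x
  calc ∫ g, F g ∂Measure.pi μ
      = ∫ p, F (Function.update p.1 x p.2) ∂(Measure.pi μ).prod (μ x) := by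
        conv_lhs => rw [← hupdate.map_eq]
        exact integral_map hupdate.aemeasurable (by simpa only [hupdate.map_eq] using hF.1)
    _ = ∫ g, ∫ t, F (Function.update g x t) ∂μ x ∂Measure.pi μ :=
        integral_prod _ ((hupdate.integrable_comp hF.aestronglyMeasurable).2 hF)

theorem hasDerivAt_gaussianPDFReal (m : ℝ) (v : NNReal) (t : ℝ) :
    HasDerivAt (gaussianPDFReal m v) (-((t - m) / v) * gaussianPDFReal m v t) t := by
  have hexponent : HasDerivAt (fun s => -(s - m) ^ 2 / (2 * v)) (-((t - m) / v)) t :=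
    ((((hasDerivAt_id t).sub_const m).pow 2).neg.div_const (2 * (v : ℝ))).congr_deriv
      (by simp; ring)
  rw [gaussianPDFReal_def]
  exact (hexponent.exp.const_mul _).congr_deriv (by ring)

theorem integrable_gaussianPDFReal_mul_iff {m : ℝ} {v : NNReal} (hv : v ≠ 0) {u : ℝ → ℝ} :
    Integrable (fun t => gaussianPDFReal m v t * u t) ↔ Integrable u (gaussianReal m v) := by
  rw [gaussianReal_of_var_ne_zero m hv, integrable_withDensity_iff_integrable_smul'
    (measurable_gaussianPDF m v) (ae_of_all _ fun _ => gaussianPDF_lt_top)]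
  simp [toReal_gaussianPDF]

theorem integral_deriv_gaussianReal {m : ℝ} {v : NNReal} {u u' : ℝ → ℝ}
    (hu : ∀ t, HasDerivAt u (u' t) t) (hint : Integrable u (gaussianReal m v))
    (hint' : Integrable u' (gaussianReal m v))
    (hmul : Integrable (fun t => (t - m) * u t) (gaussianReal m v)) :
    v * ∫ t, u' t ∂gaussianReal m v = ∫ t, (t - m) * u t ∂gaussianReal m v := by
  rcases eq_or_ne v 0 with rfl | hv
  · simp
  have hzero : ∫ t, gaussianPDFReal m v t * (u' t - (v : ℝ)⁻¹ * ((t - m) * u t)) = 0 := by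
    refine integral_eq_zero_of_hasDerivAt_of_integrable
      (fun t => ((hasDerivAt_gaussianPDFReal m v t).mul (hu t)).congr_deriv (by ring)) ?_ ?_
    · exact (integrable_gaussianPDFReal_mul_iff hv).2 (hint'.sub (hmul.const_mul _))
    · exact (integrable_gaussianPDFReal_mul_iff hv).2 hint
  simp_rw [← smul_eq_mul (gaussianPDFReal m v _)] at hzero
  rw [← integral_gaussianReal_eq_integral_smul hv, integral_sub hint' (hmul.const_mul _),
    integral_const_mul, sub_eq_zero] at hzero
  rw [hzero, mul_inv_cancel_left₀ (by simpa using hv)]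

end Gaussian

section PartialDerivative

theorem pd_eval {ι : Type*} [DecidableEq ι] (x : ι) : pd x (fun g => g x) = 1 := by
  funext g
  simp [pd]

@[fun_prop]
theorem hasTemperateGrowth_eval {ι : Type*} [Fintype ι] (x : ι) :
    (fun g : ι → ℝ => g x).HasTemperateGrowth :=
  (ContinuousLinearMap.proj x : (ι → ℝ) →L[ℝ] ℝ).hasTemperateGrowth

section Finite

variable {ι : Type*} [Finite ι] [DecidableEq ι] {F G : (ι → ℝ) → ℝ} {g : ι → ℝ}

theorem pd_eq_fderiv (hF : DifferentiableAt ℝ F g) (x : ι) :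
    pd x F g = fderiv ℝ F g (Pi.single x 1) := by
  cases nonempty_fintype ι
  rw [← Function.update_eq_self x g] at hF
  have hcomp := hF.hasFDerivAt.comp_hasDerivAt (g x) (hasDerivAt_update g x (g x))
  rw [Function.update_eq_self] at hcomp
  exact hcomp.deriv

theorem hasDerivAt_comp_update (hF : Differentiable ℝ F) (g : ι → ℝ) (x : ι) (t : ℝ) :
    HasDerivAt (fun s => F (Function.update g x s)) (pd x F (Function.update g x t)) t := by
  cases nonempty_fintype ι
  rw [pd_eq_fderiv (hF _)]
  exact (hF _).hasFDerivAt.comp_hasDerivAt t (hasDerivAt_update g x t)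

theorem pd_mul (hF : Differentiable ℝ F) (hG : Differentiable ℝ G) (x : ι) :
    pd x (F * G) = pd x F * G + F * pd x G := by
  cases nonempty_fintype ι
  funext g
  simp only [Pi.add_apply, Pi.mul_apply, pd_eq_fderiv (hF g), pd_eq_fderiv (hG g),
    pd_eq_fderiv ((hF g).mul (hG g)), fderiv_mul (hF g) (hG g), _root_.add_apply,
    _root_.smul_apply, smul_eq_mul]
  ring

theorem pd_sub (hF : Differentiable ℝ F) (hG : Differentiable ℝ G) (x : ι) :
    pd x (F - G) = pd x F - pd x G := by
  cases nonempty_fintype ι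
  funext g
  simp only [Pi.sub_apply, pd_eq_fderiv (hF g), pd_eq_fderiv (hG g),
    pd_eq_fderiv ((hF g).sub (hG g)), fderiv_sub (hF g) (hG g), _root_.sub_apply]

end Finite

variable {ι : Type*} [Fintype ι] [DecidableEq ι] {F : (ι → ℝ) → ℝ}

@[fun_prop]
theorem hasTemperateGrowth_pd (hF : F.HasTemperateGrowth) (x : ι) :
    (pd x F).HasTemperateGrowth := by
  rw [show pd x F = ContinuousLinearMap.apply ℝ ℝ (Pi.single x 1) ∘ fderiv ℝ F from
    funext fun g => pd_eq_fderiv (differentiable_of_hasTemperateGrowth hF g) x]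
  exact (ContinuousLinearMap.hasTemperateGrowth _).comp (hasTemperateGrowth_fderiv hF)

theorem hasTemperateGrowth_update (g : ι → ℝ) (x : ι) :
    (Function.update g x).HasTemperateGrowth := by
  rw [show Function.update g x = fun t => Function.update g x 0 + t • Pi.single x 1 by
    ext t i; rcases eq_or_ne i x with rfl | hi <;> simp [*]]
  fun_prop

end PartialDerivative

section IntegrationByParts

/-- The law of a family of i.i.d. standard Gaussian variables indexed by `ι`. -/
noncomputable abbrev stdGaussianPi (ι : Type*) [Fintype ι] : Measure (ι → ℝ) :=
  Measure.pi fun _ => gaussianReal 0 1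

variable {ι : Type*} [Fintype ι] [DecidableEq ι] {F w : (ι → ℝ) → ℝ}

theorem integral_pd (hF : F.HasTemperateGrowth) (x : ι) :
    ∫ g, pd x F g ∂stdGaussianPi ι = ∫ g, g x * F g ∂stdGaussianPi ι := by
  have stein (g : ι → ℝ) : ∫ t, pd x F (Function.update g x t) ∂gaussianReal 0 1 =
      ∫ t, t * F (Function.update g x t) ∂gaussianReal 0 1 := by
    have hF_update := hF.comp (hasTemperateGrowth_update g x)
    have hpd_update := (hasTemperateGrowth_pd hF x).comp (hasTemperateGrowth_update g x)
    simpa using integral_deriv_gaussianReal (m := 0) (v := 1)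
      (hasDerivAt_comp_update (differentiable_of_hasTemperateGrowth hF) g x)
      (integrable_of_hasTemperateGrowth hF_update) (integrable_of_hasTemperateGrowth hpd_update)
      (integrable_of_hasTemperateGrowth
        (.mul (f := fun t => t - 0) (by fun_prop) hF_update))
  rw [integral_pi_eq_integral_integral_update (F := pd x F)
      (integrable_of_hasTemperateGrowth (by fun_prop)) x,
    integral_pi_eq_integral_integral_update (F := fun g => g x * F g)
      (integrable_of_hasTemperateGrowth (by fun_prop)) x]
  simp_rw [stein, Function.update_self]

/-- The creation operator in direction `x`: the formal adjoint of `pd x` in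
`L²(stdGaussianPi ι)`. It raises the Hermite degree in `g x` by one. -/
noncomputable def creation (x : ι) (w : (ι → ℝ) → ℝ) : (ι → ℝ) → ℝ :=
  (fun g => g x) * w - pd x w

@[fun_prop]
theorem hasTemperateGrowth_creation (hw : w.HasTemperateGrowth) (x : ι) :
    (creation x w).HasTemperateGrowth := by
  unfold creation
  fun_prop

theorem integral_mul_pd (hw : w.HasTemperateGrowth) (hF : F.HasTemperateGrowth) (x : ι) :
    ∫ g, w g * pd x F g ∂stdGaussianPi ι = ∫ g, creation x w g * F g ∂stdGaussianPi ι := by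
  have hibp := integral_pd (hw.mul hF) x
  simp only [pd_mul (differentiable_of_hasTemperateGrowth hw)
    (differentiable_of_hasTemperateGrowth hF), Pi.add_apply, Pi.mul_apply] at hibp
  rw [integral_add (integrable_of_hasTemperateGrowth (by fun_prop))
      (integrable_of_hasTemperateGrowth (by fun_prop)), ← eq_sub_iff_add_eq',
    ← integral_sub (integrable_of_hasTemperateGrowth (by fun_prop))
      (integrable_of_hasTemperateGrowth (by fun_prop))] at hibp
  rw [hibp]
  congr with g
  simp only [creation, Pi.sub_apply, Pi.mul_apply]
  ring

theorem pd_creation (hw : w.HasTemperateGrowth) (x : ι) :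
    pd x (creation x w) = w + creation x (pd x w) := by
  have hwd := differentiable_of_hasTemperateGrowth hw
  have hpdd := differentiable_of_hasTemperateGrowth (hasTemperateGrowth_pd hw x)
  unfold creation
  rw [pd_sub ((differentiable_apply x).mul hwd) hpdd, pd_mul (differentiable_apply x) hwd, pd_eval]
  ring

theorem integral_creation_sq (hw : w.HasTemperateGrowth) (x : ι) :
    ∫ g, creation x w g ^ 2 ∂stdGaussianPi ι =
      ∫ g, w g ^ 2 ∂stdGaussianPi ι + ∫ g, pd x w g ^ 2 ∂stdGaussianPi ι := by
  calc ∫ g, creation x w g ^ 2 ∂stdGaussianPi ι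
      = ∫ g, w g * pd x (creation x w) g ∂stdGaussianPi ι := by
        simp_rw [integral_mul_pd hw (hasTemperateGrowth_creation hw x), sq]
    _ = ∫ g, w g ^ 2 + creation x (pd x w) g * w g ∂stdGaussianPi ι := by
        simp_rw [pd_creation hw, Pi.add_apply, mul_add, sq, mul_comm]
    _ = ∫ g, w g ^ 2 ∂stdGaussianPi ι + ∫ g, creation x (pd x w) g * w g ∂stdGaussianPi ι :=
        integral_add (integrable_of_hasTemperateGrowth (by fun_prop))
          (integrable_of_hasTemperateGrowth (by fun_prop))
    _ = ∫ g, w g ^ 2 ∂stdGaussianPi ι + ∫ g, pd x w g ^ 2 ∂stdGaussianPi ι := by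
        simp_rw [← integral_mul_pd (hasTemperateGrowth_pd hw x) hw, sq]

theorem integral_pd_pd (hF : F.HasTemperateGrowth) (x : ι) :
    ∫ g, pd x (pd x F) g ∂stdGaussianPi ι = ∫ g, (g x ^ 2 - 1) * F g ∂stdGaussianPi ι := by
  rw [integral_pd (hasTemperateGrowth_pd hF x), integral_mul_pd (hasTemperateGrowth_eval x) hF]
  simp [creation, pd_eval, sq]

theorem integral_eval_sq {ι : Type*} [Fintype ι] (x : ι) : ∫ g, g x ^ 2 ∂stdGaussianPi ι = 1 := by
  classical
  simp_rw [sq, ← integral_pd (hasTemperateGrowth_eval x), pd_eval]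
  simp

end IntegrationByParts

section Bessel

variable {ι : Type*} [Fintype ι]

/-- The element `∑ c_x H₂(g_x)` of the second Wiener chaos, with `H₂(t) = t² - 1`. Integrating it
against `F` extracts the combination of the `∫ ∂²F/∂g_x²` with coefficients `c`. -/
def hermiteTwoSum (c : ι → ℝ) : (ι → ℝ) → ℝ :=
  fun g => ∑ x, c x * (g x ^ 2 - 1)

@[fun_prop]
theorem hasTemperateGrowth_hermiteTwoSum (c : ι → ℝ) : (hermiteTwoSum c).HasTemperateGrowth := by
  unfold hermiteTwoSum
  fun_prop

variable [DecidableEq ι] {F f : (ι → ℝ) → ℝ}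

theorem pd_hermiteTwoSum (c : ι → ℝ) (x : ι) :
    pd x (hermiteTwoSum c) = fun g => 2 * c x * g x := by
  funext g
  have hterm (i : ι) : HasDerivAt (fun t => c i * (Function.update g x t i ^ 2 - 1))
      (c i * (2 * g i * (Pi.single x 1 : ι → ℝ) i)) (g x) :=
    ((((hasDerivAt_pi.1 (hasDerivAt_update g x (g x)) i).pow 2).sub_const 1).const_mul
      (c i)).congr_deriv (by simp)
  calc pd x (hermiteTwoSum c) g = ∑ i, c i * (2 * g i * (Pi.single x 1 : ι → ℝ) i) :=
        (HasDerivAt.fun_sum fun i _ => hterm i).deriv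
    _ = 2 * c x * g x := by
        simp [Pi.single_apply]
        ring

theorem integral_hermiteTwoSum_mul (c : ι → ℝ) (hF : F.HasTemperateGrowth) :
    ∫ g, hermiteTwoSum c g * F g ∂stdGaussianPi ι =
      ∑ x, c x * ∫ g, pd x (pd x F) g ∂stdGaussianPi ι := by
  simp_rw [hermiteTwoSum, sum_mul, integral_pd_pd hF, mul_assoc]
  rw [integral_finsetSum _ fun x _ => integrable_of_hasTemperateGrowth (by fun_prop)]
  simp_rw [integral_const_mul]

theorem integral_hermiteTwoSum_sq {ι : Type*} [Fintype ι] (c : ι → ℝ) :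
    ∫ g, hermiteTwoSum c g ^ 2 ∂stdGaussianPi ι = 2 * ∑ x, c x ^ 2 := by
  classical
  have hpd_pd (x : ι) (g : ι → ℝ) : pd x (pd x (hermiteTwoSum c)) g = 2 * c x := by
    rw [pd_hermiteTwoSum]
    simp [pd]
  simp_rw [sq (hermiteTwoSum c _), integral_hermiteTwoSum_mul c
    (hasTemperateGrowth_hermiteTwoSum c), hpd_pd]
  simp only [integral_const, probReal_univ, one_smul, mul_sum]
  exact sum_congr rfl fun x _ => by ring

theorem integral_creation_hermiteTwoSum_sq_le (c : ι → ℝ) (y : ι) :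
    ∫ g, creation y (hermiteTwoSum c) g ^ 2 ∂stdGaussianPi ι ≤ 6 * ∑ x, c x ^ 2 := by
  have hy : c y ^ 2 ≤ ∑ x, c x ^ 2 :=
    single_le_sum (f := fun x => c x ^ 2) (fun x _ => sq_nonneg _) (mem_univ y)
  rw [integral_creation_sq (hasTemperateGrowth_hermiteTwoSum c), integral_hermiteTwoSum_sq]
  simp_rw [pd_hermiteTwoSum, mul_pow, integral_const_mul, integral_eval_sq]
  linarith

theorem sum_sq_integral_pd_pd_pd_le (hf : f.HasTemperateGrowth) (y : ι) :
    ∑ x, (∫ g, pd x (pd x (pd y f)) g ∂stdGaussianPi ι) ^ 2 ≤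
      6 * ∫ g, f g ^ 2 ∂stdGaussianPi ι := by
  set c : ι → ℝ := fun x => ∫ g, pd x (pd x (pd y f)) g ∂stdGaussianPi ι
  set T := creation y (hermiteTwoSum c)
  have hpair : ∑ x, c x ^ 2 = ∫ g, T g * f g ∂stdGaussianPi ι := by
    rw [← integral_mul_pd (hasTemperateGrowth_hermiteTwoSum c) hf,
      integral_hermiteTwoSum_mul c (hasTemperateGrowth_pd hf y)]
    exact sum_congr rfl fun x _ => sq (c x)
  have hyoung : ∫ g, T g * f g ∂stdGaussianPi ι ≤
      ∫ g, 12⁻¹ * T g ^ 2 + 3 * f g ^ 2 ∂stdGaussianPi ι :=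
    integral_mono (integrable_of_hasTemperateGrowth (by fun_prop))
      (integrable_of_hasTemperateGrowth (by fun_prop))
      fun g => by nlinarith [sq_nonneg (T g - 6 * f g)]
  rw [integral_add (integrable_of_hasTemperateGrowth (by fun_prop))
    (integrable_of_hasTemperateGrowth (by fun_prop)), integral_const_mul,
    integral_const_mul] at hyoung
  have hT := integral_creation_hermiteTwoSum_sq_le c y
  change ∑ x, c x ^ 2 ≤ _
  linarith

end Bessel

section Gibbs

variable {E Ω : Type*} [NormedAddCommGroup E] [NormedSpace ℝ E] [Fintype Ω]

/-- The partition function of a Gibbs measure on the finite state space `Ω`, with base energy `H`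
and an energy `ℓ ω` that is linear in the external field `g`. -/
noncomputable def partitionFunction (H : Ω → ℝ) (ℓ : Ω → StrongDual ℝ E) (g : E) : ℝ :=
  ∑ ω, exp (H ω + ℓ ω g)

/-- The vector of probabilities that the Gibbs measure with energy `H + ℓ` and external field `g`
gives to the states. -/
noncomputable def gibbsWeight (H : Ω → ℝ) (ℓ : Ω → StrongDual ℝ E) (g : E) : Ω → ℝ :=
  fun ω => exp (H ω + ℓ ω g) / partitionFunction H ℓ g

/-- The vector field `w ↦ w * (ℓ - ∑ ω, w ω • ℓ ω)` that drives the Gibbs weights as the external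
field varies. -/
def gibbsField (ℓ : Ω → StrongDual ℝ E) (w : Ω → ℝ) : E →L[ℝ] Ω → ℝ :=
  .pi fun ω => w ω • (ℓ ω - ∑ ω', w ω' • ℓ ω')

theorem hasTemperateGrowth_gibbsField (ℓ : Ω → StrongDual ℝ E) :
    (gibbsField ℓ).HasTemperateGrowth := by
  classical
  have hsum : gibbsField ℓ = fun w => ∑ ω, ContinuousLinearMap.compL ℝ E ℝ (Ω → ℝ)
      (ContinuousLinearMap.single ℝ (fun _ => ℝ) ω) (w ω • (ℓ ω - ∑ ω', w ω' • ℓ ω')) := by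
    ext w v ω
    simp [gibbsField, Pi.single_apply, mul_sub, sum_sub_distrib]
  rw [hsum]
  fun_prop

variable [Nonempty Ω] (H : Ω → ℝ) (ℓ : Ω → StrongDual ℝ E) (g : E)

theorem partitionFunction_pos : 0 < partitionFunction H ℓ g :=
  sum_pos (fun _ _ => exp_pos _) univ_nonempty

theorem gibbsWeight_nonneg (ω : Ω) : 0 ≤ gibbsWeight H ℓ g ω :=
  div_nonneg (exp_pos _).le (partitionFunction_pos H ℓ g).le

theorem sum_gibbsWeight : ∑ ω, gibbsWeight H ℓ g ω = 1 := by
  simp_rw [gibbsWeight, ← sum_div]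
  exact div_self (partitionFunction_pos H ℓ g).ne'

theorem norm_gibbsWeight_le_one : ‖gibbsWeight H ℓ g‖ ≤ 1 := by
  refine (pi_norm_le_iff_of_nonneg zero_le_one).2 fun ω => ?_
  rw [norm_of_nonneg (gibbsWeight_nonneg H ℓ g ω), ← sum_gibbsWeight H ℓ g]
  exact single_le_sum (fun ω _ => gibbsWeight_nonneg H ℓ g ω) (mem_univ ω)

theorem hasFDerivAt_log_partitionFunction :
    HasFDerivAt (fun g => log (partitionFunction H ℓ g)) (∑ ω, gibbsWeight H ℓ g ω • ℓ ω) g := by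
  have hZ : HasFDerivAt (partitionFunction H ℓ) (∑ ω, exp (H ω + ℓ ω g) • ℓ ω) g :=
    .fun_sum fun ω _ => ((ℓ ω).hasFDerivAt.const_add (H ω)).exp
  refine (hZ.log (partitionFunction_pos H ℓ g).ne').congr_fderiv ?_
  simp_rw [smul_sum, smul_smul, gibbsWeight, div_eq_inv_mul]

theorem hasFDerivAt_gibbsWeight :
    HasFDerivAt (gibbsWeight H ℓ) (gibbsField ℓ (gibbsWeight H ℓ g)) g := by
  refine hasFDerivAt_pi.2 fun ω => ?_
  have hexp (g : E) :
      gibbsWeight H ℓ g ω = exp (H ω + ℓ ω g - log (partitionFunction H ℓ g)) := by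
    rw [exp_sub, exp_log (partitionFunction_pos H ℓ g), gibbsWeight]
  simp_rw [hexp]
  exact (((ℓ ω).hasFDerivAt.const_add (H ω)).sub (hasFDerivAt_log_partitionFunction H ℓ g)).exp

theorem hasTemperateGrowth_gibbsWeight : (gibbsWeight H ℓ).HasTemperateGrowth :=
  hasTemperateGrowth_of_hasFDerivAt_comp (hasTemperateGrowth_gibbsField ℓ)
    (norm_gibbsWeight_le_one H ℓ) (hasFDerivAt_gibbsWeight H ℓ)

variable {ι : Type*} [Fintype ι] [DecidableEq ι] {H} {ℓ : Ω → StrongDual ℝ (ι → ℝ)}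

theorem pd_log_partitionFunction (y : ι) :
    pd y (fun g => log (partitionFunction H ℓ g)) =
      fun g => ∑ ω, gibbsWeight H ℓ g ω * ℓ ω (Pi.single y 1) := by
  funext g
  have hlog := hasFDerivAt_log_partitionFunction H ℓ g
  rw [pd_eq_fderiv hlog.differentiableAt, hlog.fderiv]
  simp

theorem hasTemperateGrowth_pd_log_partitionFunction (y : ι) :
    (pd y fun g => log (partitionFunction H ℓ g)).HasTemperateGrowth := by
  have hweight (ω : Ω) : (fun g => gibbsWeight H ℓ g ω).HasTemperateGrowth :=
    (hasTemperateGrowth_eval ω).comp (hasTemperateGrowth_gibbsWeight H ℓ)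
  rw [pd_log_partitionFunction]
  exact .sum fun ω _ => (hweight ω).mul (.const _)

theorem abs_pd_log_partitionFunction_le {y : ι} {C : ℝ} (hC : ∀ ω, |ℓ ω (Pi.single y 1)| ≤ C)
    (g : ι → ℝ) : |pd y (fun g => log (partitionFunction H ℓ g)) g| ≤ C := by
  rw [pd_log_partitionFunction]
  calc |∑ ω, gibbsWeight H ℓ g ω * ℓ ω (Pi.single y 1)|
      ≤ ∑ ω, gibbsWeight H ℓ g ω * C := by
        refine (abs_sum_le_sum_abs _ _).trans (sum_le_sum fun ω _ => ?_)
        have hw := gibbsWeight_nonneg H ℓ g ω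
        rw [abs_mul, abs_of_nonneg hw]
        exact mul_le_mul_of_nonneg_left (hC ω) hw
    _ = C := by rw [← sum_mul, sum_gibbsWeight, one_mul]

end Gibbs

theorem fourth_partials_bound_general {ι Ω : Type*} [Fintype ι] [DecidableEq ι] [Fintype Ω]
    [Nonempty Ω] (H : Ω → ℝ) {s : Ω → ι → ℝ} (hs : ∀ ω x, |s ω x| ≤ 1) (h : ℝ) :
    ∑ x, ∑ y, (∫ g, pd x (pd x (pd y (pd y
        fun g' => log (∑ ω, exp (H ω + h * ∑ z, g' z * s ω z))))) g ∂stdGaussianPi ι) ^ 2 ≤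
      6 * h ^ 2 * Fintype.card ι := by
  set ℓ : Ω → StrongDual ℝ (ι → ℝ) := fun ω => ∑ z, (h * s ω z) • .proj z
  have hlog : (fun g => log (∑ ω, exp (H ω + h * ∑ z, g z * s ω z))) =
      fun g => log (partitionFunction H ℓ g) := by
    simp [partitionFunction, ℓ, mul_sum, mul_comm, mul_left_comm]
  have hℓ (ω : Ω) (y : ι) : |ℓ ω (Pi.single y 1)| ≤ |h| := by
    simpa [ℓ, Pi.single_apply, abs_mul] using mul_le_of_le_one_right (abs_nonneg h) (hs ω y)
  have hsq (y : ι) :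
      ∫ g, pd y (fun g => log (partitionFunction H ℓ g)) g ^ 2 ∂stdGaussianPi ι ≤ h ^ 2 := by
    refine (integral_mono_of_nonneg (ae_of_all _ fun _ => sq_nonneg _) (integrable_const (h ^ 2))
      (ae_of_all _ fun g => ?_)).trans (by simp)
    exact sq_le_sq.2 (abs_pd_log_partitionFunction_le (fun ω => hℓ ω y) g)
  rw [hlog, sum_comm]
  calc _ ≤ ∑ y : ι, 6 * h ^ 2 := sum_le_sum fun y _ =>
        (sum_sq_integral_pd_pd_pd_le (hasTemperateGrowth_pd_log_partitionFunction y) y).trans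
          (mul_le_mul_of_nonneg_left (hsq y) (by norm_num))
    _ = 6 * h ^ 2 * Fintype.card ι := by simp; ring

theorem abs_spin (b : Bool) : |spin b| = 1 := by
  cases b <;> simp [spin]

/-- Bound on the mixed fourth partial derivatives of the log-partition function
with respect to the Gaussian disorder variables:
`∑_{x,y} (E ∂⁴F_n/∂g_x²∂g_y²)² ≤ 24 h² |V_n|`. -/
theorem fourth_partials_bound (d n : ℕ) (β h : ℝ) (hβ : 0 < β) (hh : 0 < h) :
    ∑ x : {x // x ∈ box d n}, ∑ y : {x // x ∈ box d n},
        (∫ g, pd x (pd x (pd y (pd y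
            (fun g' => Real.log (Z d n β h g'))))) g ∂(μdis d n)) ^ 2
      ≤ 24 * h ^ 2 * ((box d n).card : ℝ) := by
  simp only [Z, energy, μdis]
  refine (fourth_partials_bound_general (Ω := Config d n) _
    (fun σ x => (abs_spin (σ x)).le) h).trans ?_
  rw [Fintype.card_coe]
  gcongr
  norm_num
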